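/- For all integers n ≥ 2 and d ≥ 4, setting m = ⌊(d−2)/2⌋, one has the binomial inequality C(m+n−1, n−1) < (d−1)^{n−1}. -/

import Mathlib

theorem choose_lt_pow_general {m k b : ℕ} (hk : k ≠ 0) (hb : m + 1 < b) :
    (m + k).choose k < b ^ k :=
  calc (m + k).choose k
      ≤ (m + 1) ^ k := Nat.choose_add_le_add_one_pow m k
    _ < b ^ k := Nat.pow_lt_pow_left hb hk

/-- The binomial inequality `C(m+n-1, n-1) < (d-1)^{n-1}` for `n ≥ 2`, `d ≥ 4` and
`m = ⌊(d-2)/2⌋`. -/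
theorem choose_lt_pow (n d : ℕ) (hn : 2 ≤ n) (hd : 4 ≤ d) :
    Nat.choose ((d - 2) / 2 + n - 1) (n - 1) < (d - 1) ^ (n - 1) := by
  rw [Nat.add_sub_assoc (by lia : 1 ≤ n)]
  exact choose_lt_pow_general (by lia) (by lia)
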